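/- Let j ≥ 2. In W = Λ^{2j} ℚ^{4j−1} with the permutation action of S_{4j−1} and the submodule K generated by ρ, define v = (e_1 ∧ e_2 − e_1 ∧ e_3 + e_2 ∧ e_3) ∧ S and w = ∑_{i=1}^{2j−2} (−1)^i e_1 ∧ e_2 ∧ e_3 ∧ S_i. Then (2j−2)·v − 3·w ∈ K. -/

import Mathlib

set_option synthInstance.maxHeartbeats 1000000
set_option maxHeartbeats 1000000

noncomputable section

open ExteriorAlgebra

/-- The standard basis vector `e_{m+1}` of `ℚ^{4j−1}` (with `0`-based index `m`). -/
def ε (j : ℕ) (m : Fin (4*j-1)) : Fin (4*j-1) → ℚ := Pi.single m 1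

/-- The action of `S_N` on the exterior algebra of `ℚ^N` induced by permuting the standard
basis vectors (`g` sends `e_m` to `e_{g m}`). -/
def pact (N : ℕ) (g : Equiv.Perm (Fin N)) :
    ExteriorAlgebra ℚ (Fin N → ℚ) →ₗ[ℚ] ExteriorAlgebra ℚ (Fin N → ℚ) :=
  (ExteriorAlgebra.map (LinearMap.funLeft ℚ ℚ ⇑g⁻¹)).toLinearMap

/-- The element of the `i`-th loop `B_i = {2i+2, 2i+3}` (1-indexed; here `i` is `0`-based)
selected by the Boolean `b`. -/
def idx (j : ℕ) (k : Fin (2*j-2)) (b : Bool) : Fin (4*j-1) :=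
  ⟨2*(k : ℕ) + 3 + b.toNat, by have := Bool.toNat_lt b; omega⟩

/-- `S_I`: the sum, over all choices of one element `s_i ∈ B_i` for each loop `i ∉ I`, of the
wedge products `e_{s_{i_1}} ∧ ⋯ ∧ e_{s_{i_m}}` taken in increasing order of the loop indices
`i ∉ I`. -/
def SI (j : ℕ) (I : Finset (Fin (2*j-2))) : ExteriorAlgebra ℚ (Fin (4*j-1) → ℚ) :=
  ∑ c ∈ Finset.univ.filter (fun c : Fin (2*j-2) → Bool => ∀ i ∈ I, c i = false),
    (List.ofFn fun k : Fin (2*j-2) =>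
      if k ∈ I then 1 else ExteriorAlgebra.ι ℚ (ε j (idx j k (c k)))).prod

/-- The wedge `e_{2j} ∧ e_{2j+1} ∧ ⋯ ∧ e_{4j−1}`. -/
def ρbase (j : ℕ) : ExteriorAlgebra ℚ (Fin (4*j-1) → ℚ) :=
  (List.ofFn fun k : Fin (2*j) =>
    ExteriorAlgebra.ι ℚ (ε j ⟨2*j - 1 + (k : ℕ), by omega⟩)).prod

/-- `ρ = (1 + ∑_{i=1}^{2j−1} (i 2j)) · (e_{2j} ∧ e_{2j+1} ∧ ⋯ ∧ e_{4j−1})`. -/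
def ρElt (j : ℕ) : ExteriorAlgebra ℚ (Fin (4*j-1) → ℚ) :=
  ρbase j + ∑ m : Fin (2*j-1),
    pact (4*j-1) (Equiv.swap (⟨(m : ℕ), by omega⟩ : Fin (4*j-1)) ⟨2*j - 1, by have := m.isLt; omega⟩) (ρbase j)

/-- `K`: the `ℚ[S_{4j−1}]`-submodule of `W = Λ^{2j} ℚ^{4j−1}` generated by `ρ`, i.e. the span
of the `S_{4j−1}`-orbit of `ρ`. -/
def Ksub (j : ℕ) : Submodule ℚ (ExteriorAlgebra ℚ (Fin (4*j-1) → ℚ)) :=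
  Submodule.span ℚ (Set.range fun g : Equiv.Perm (Fin (4*j-1)) => pact (4*j-1) g (ρElt j))

end

noncomputable section

/-- `e_{m+1}` as an element of the exterior algebra. -/
def E (j : ℕ) (m : Fin (4*j-1)) : ExteriorAlgebra ℚ (Fin (4*j-1) → ℚ) :=
  ExteriorAlgebra.ι ℚ (ε j m)

end

section helpers

open ExteriorAlgebra

lemma anti {V : Type*} [AddCommGroup V] [Module ℚ V] (x y : V) :
    ι ℚ x * ι ℚ y = - (ι ℚ y * ι ℚ x) :=
  eq_neg_of_add_eq_zero_left (ExteriorAlgebra.ι_add_mul_swap x y)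

lemma lemC {V : Type*} [AddCommGroup V] [Module ℚ V] :
    ∀ (n : ℕ) (u : Fin n → V) (k : Fin n),
      ι ℚ (u k) * (List.ofFn fun k => ι ℚ (u k)).prod = 0 := by
  intro n
  induction n with
  | zero => intro u k; exact k.elim0
  | succ n ih =>
    intro u k
    rw [List.ofFn_succ, List.prod_cons, ← mul_assoc]
    refine Fin.cases ?_ (fun k => ?_) k
    · simp
    · rw [anti, neg_mul, mul_assoc, ih (fun k => u k.succ) k]; simp

lemma lemB {V : Type*} [AddCommGroup V] [Module ℚ V] :
    ∀ (n : ℕ) (u : Fin n → V) (i k : Fin n), k ≠ i →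
      ι ℚ (u k) * (List.ofFn fun k => if k = i then 1 else ι ℚ (u k)).prod = 0 := by
  intro n
  induction n with
  | zero => intro u k; exact k.elim0
  | succ n ih =>
    intro u i k hik
    rw [List.ofFn_succ, List.prod_cons, ← mul_assoc]
    rcases Fin.eq_zero_or_eq_succ i with rfl | ⟨i, rfl⟩
    · rcases Fin.eq_zero_or_eq_succ k with rfl | ⟨k, rfl⟩
      · exact absurd rfl hik
      · simpa [Fin.succ_ne_zero] using lemC n (fun k => u k.succ) k
    · rcases Fin.eq_zero_or_eq_succ k with rfl | ⟨k, rfl⟩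
      · rw [if_neg (Fin.succ_ne_zero i).symm, ExteriorAlgebra.ι_sq_zero, zero_mul]
      · rw [if_neg (Fin.succ_ne_zero i).symm, anti, neg_mul, mul_assoc]
        have := ih (fun k => u k.succ) i k (fun h => hik (by rw [h]))
        simp only [Fin.succ_inj] at this ⊢
        rw [this]; simp

lemma lemA {V : Type*} [AddCommGroup V] [Module ℚ V] :
    ∀ (n : ℕ) (u : Fin n → V) (i : Fin n),
      ι ℚ (u i) * (List.ofFn fun k => if k = i then 1 else ι ℚ (u k)).prod
        = (-1 : ℚ)^(i : ℕ) • (List.ofFn fun k => ι ℚ (u k)).prod := by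
  intro n
  induction n with
  | zero => intro u k; exact k.elim0
  | succ n ih =>
    intro u i
    rw [List.ofFn_succ, List.prod_cons, ← mul_assoc]
    rcases Fin.eq_zero_or_eq_succ i with rfl | ⟨i, rfl⟩
    · simp [Fin.succ_ne_zero, List.ofFn_succ]
    · rw [if_neg (Fin.succ_ne_zero i).symm, anti, neg_mul, mul_assoc]
      have := ih (fun k => u k.succ) i
      simp only [Fin.succ_inj] at this ⊢
      rw [this, List.ofFn_succ, List.prod_cons, Fin.val_succ, pow_succ]
      simp

/-- the loop sum -/
noncomputable def loopv (j : ℕ) (k : Fin (2*j-2)) : Fin (4*j-1) → ℚ :=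
  ε j (idx j k false) + ε j (idx j k true)

lemma SI_eq (j : ℕ) (I : Finset (Fin (2*j-2))) :
    SI j I = (List.ofFn fun k => if k ∈ I then 1 else ι ℚ (loopv j k)).prod := by
  classical
  have h := (MultilinearMap.mkPiAlgebraFin ℚ (2*j-2)
    (ExteriorAlgebra ℚ (Fin (4*j-1) → ℚ))).map_sum
    (g := fun (k : Fin (2*j-2)) (b : Bool) =>
      if k ∈ I then (if b = false then (1 : ExteriorAlgebra ℚ (Fin (4*j-1) → ℚ)) else 0)
        else ι ℚ (ε j (idx j k b)))
  simp only [MultilinearMap.mkPiAlgebraFin_apply] at h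
  have e1 : (fun k => if k ∈ I then (1 : ExteriorAlgebra ℚ (Fin (4*j-1) → ℚ))
      else ι ℚ (loopv j k)) = fun k => ∑ b : Bool,
      if k ∈ I then (if b = false then (1 : ExteriorAlgebra ℚ (Fin (4*j-1) → ℚ)) else 0)
        else ι ℚ (ε j (idx j k b)) := by
    funext k
    by_cases hk : k ∈ I
    · simp [hk]
    · simp [hk, loopv, add_comm]
  rw [e1, h, SI, Finset.sum_filter]
  refine Finset.sum_congr rfl fun c _ => ?_
  split_ifs with hc
  · congr 2
    funext k
    by_cases hk : k ∈ I
    · simp [hk, hc k hk]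
    · simp [hk]
  · push Not at hc
    obtain ⟨i, hi, hci⟩ := hc
    symm
    apply List.prod_eq_zero
    rw [List.mem_ofFn]
    exact ⟨i, by simp [hi, hci]⟩

/-- the sum of all basis vectors -/
noncomputable def sig (j : ℕ) : ExteriorAlgebra ℚ (Fin (4*j-1) → ℚ) := ∑ m, E j m

lemma pact_E (j : ℕ) (g : Equiv.Perm (Fin (4*j-1))) (m : Fin (4*j-1)) :
    ExteriorAlgebra.map (LinearMap.funLeft ℚ ℚ ⇑g⁻¹) (E j m) = E j (g m) := by
  rw [E, E, ExteriorAlgebra.map_apply_ι]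
  congr 1
  funext x
  simp only [LinearMap.funLeft_apply, ε, Pi.single_apply, Equiv.Perm.inv_eq_iff_eq]

noncomputable def Tt (j : ℕ) : ExteriorAlgebra ℚ (Fin (4*j-1) → ℚ) :=
  (List.ofFn fun k : Fin (2*j-1) => E j ⟨2*j + (k : ℕ), by omega⟩).prod

lemma ρbase_eq (j : ℕ) (hj : 2 ≤ j) : ρbase j = E j ⟨2*j-1, by omega⟩ * Tt j := by
  obtain ⟨n, hn⟩ : ∃ n, 2*j = n+1 := ⟨2*j-1, by omega⟩
  have h1 : ρbase j = (List.ofFn fun k : Fin (n+1) =>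
    E j ⟨2*j - 1 + (k : ℕ), by omega⟩).prod := by
    rw [ρbase, List.ofFn_congr hn]; rfl
  have h2 : Tt j = (List.ofFn fun k : Fin n => E j ⟨2*j + (k : ℕ), by omega⟩).prod := by
    rw [Tt, List.ofFn_congr (show 2*j-1 = n by omega)]; rfl
  rw [h1, h2, List.ofFn_succ, List.prod_cons]
  congr 4
  funext k
  congr 2
  simp; omega

lemma mapE_prod (j n : ℕ) (g : Equiv.Perm (Fin (4*j-1))) (s : Fin n → Fin (4*j-1)) :
    ExteriorAlgebra.map (LinearMap.funLeft ℚ ℚ ⇑g⁻¹) (List.ofFn fun k => E j (s k)).prod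
      = (List.ofFn fun k => E j (g (s k))).prod := by
  rw [_root_.map_list_prod, List.map_ofFn]
  congr 2
  funext k
  exact pact_E j g _

lemma ρElt_eq (j : ℕ) (hj : 2 ≤ j) : ρElt j = sig j * Tt j := by
  have hs : ∀ m : Fin (2*j-1), pact (4*j-1) (Equiv.swap (⟨(m : ℕ), by omega⟩ : Fin (4*j-1))
      ⟨2*j - 1, by have := m.isLt; omega⟩) (ρbase j) = E j ⟨m, by omega⟩ * Tt j := by
    intro m
    rw [ρbase_eq j hj, pact, AlgHom.toLinearMap_apply, _root_.map_mul, pact_E,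
      Equiv.swap_apply_right, Tt, mapE_prod]
    congr 4
    funext k
    congr 1
    apply Equiv.swap_apply_of_ne_of_ne
    · simp [Fin.ext_iff]; omega
    · simp [Fin.ext_iff]; omega
  let F : ℕ → ExteriorAlgebra ℚ (Fin (4*j-1) → ℚ) := fun m =>
    if h : m < 4*j-1 then E j ⟨m, h⟩ * Tt j else 0
  have hσ : sig j * Tt j = ∑ m ∈ Finset.range (4*j-1), F m := by
    rw [sig, Finset.sum_mul, ← Fin.sum_univ_eq_sum_range]
    refine Finset.sum_congr rfl fun m _ => ?_
    simp [F]
  have hz : ∀ m ∈ Finset.range (4*j-1), m ∉ Finset.range (2*j) → F m = 0 := by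
    intro m hm hm'
    rw [Finset.mem_range] at hm hm'
    simp only [F, dif_pos hm]
    have := lemC (2*j-1) (fun k : Fin (2*j-1) => ε j ⟨2*j + (k : ℕ), by omega⟩)
      ⟨m - 2*j, by omega⟩
    have e : (⟨m, hm⟩ : Fin (4*j-1)) = ⟨2*j + (m - 2*j), by omega⟩ := by
      ext; simp; omega
    rw [e]
    exact this
  rw [hσ, ← Finset.sum_subset (Finset.range_subset_range.2 (by omega)) hz, ρElt,
    Finset.sum_congr rfl (fun m _ => hs m), ρbase_eq j hj]
  obtain ⟨n, hn⟩ : ∃ n, 2*j = n+1 := ⟨2*j-1, by omega⟩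
  have : Finset.range (2*j) = Finset.range ((2*j-1)+1) := by congr 1; omega
  rw [this, Finset.sum_range_succ, add_comm, ← Fin.sum_univ_eq_sum_range]
  congr 1
  · refine Finset.sum_congr rfl fun m _ => ?_
    have : (m:ℕ) < 4*j-1 := by omega
    simp [F, this]
  · have : 2*j-1 < 4*j-1 := by omega
    simp [F, this]

lemma mem_fn (j : ℕ) (hj : 2 ≤ j) (s : Fin (2*j-1) → Fin (4*j-1)) :
    sig j * (List.ofFn fun k => E j (s k)).prod ∈ Ksub j := by
  by_cases hs : Function.Injective s
  · obtain ⟨g, hg⟩ := (Equiv.Perm.isMultiplyPretransitive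
      (Fin (4*j-1)) (2*j-1)).exists_smul_eq
      (⟨fun k : Fin (2*j-1) => (⟨2*j + (k : ℕ), by omega⟩ : Fin (4*j-1)), by
        intro a b h; simpa [Fin.ext_iff] using h⟩ : Fin (2*j-1) ↪ Fin (4*j-1)) ⟨s, hs⟩
    apply Submodule.subset_span
    refine ⟨g, ?_⟩
    simp only
    rw [ρElt_eq j hj, pact, AlgHom.toLinearMap_apply, _root_.map_mul, Tt, mapE_prod]
    congr 1
    · rw [sig, map_sum]
      simp only [pact_E]
      exact Equiv.sum_comp g (E j)
    · congr 2
      funext k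
      congr 1
      exact DFunLike.congr_fun hg k
  · have : (List.ofFn fun k => E j (s k)).prod
        = ExteriorAlgebra.ιMulti ℚ (2*j-1) (fun k => ε j (s k)) := by
      rw [ExteriorAlgebra.ιMulti_apply]; rfl
    rw [this, AlternatingMap.map_eq_zero_of_not_injective, mul_zero]
    · exact zero_mem _
    · intro h
      exact hs (fun a b hab => h (by simp [hab]))

lemma mem_list (j : ℕ) (hj : 2 ≤ j) (l : List (Fin (4*j-1))) (hl : l.length = 2*j-1) :
    sig j * (l.map (E j)).prod ∈ Ksub j := by
  have := mem_fn j hj (fun k => l.get (Fin.cast hl.symm k))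
  convert this using 3
  apply List.ext_get
  · simp [hl]
  · intro n h1 h2
    simp

lemma ofFn_ite {A : Type*} [Monoid A] (n : ℕ) (i : Fin n) (f : Fin n → A) :
    (List.ofFn fun k => if k ∈ ({i} : Finset (Fin n)) then 1 else f k).prod
      = (((List.finRange n).erase i).map f).prod := by
  rw [(List.nodup_finRange n).erase_eq_filter, List.ofFn_eq_map]
  generalize List.finRange n = l
  induction l with
  | nil => rfl
  | cons a l ih =>
    by_cases h : a = i
    · subst h; simpa using ih
    · simp only [List.map_cons, List.prod_cons]
      rw [ih]
      simp [h]

lemma mem_pair (j : ℕ) (hj : 2 ≤ j) (a b : Fin (4*j-1)) (i : Fin (2*j-2)) :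
    sig j * (E j a * E j b * SI j {i}) ∈ Ksub j := by
  rw [SI, Finset.mul_sum, Finset.mul_sum]
  refine Submodule.sum_mem _ fun c _ => ?_
  rw [ofFn_ite]
  have := mem_list j hj (a :: b :: ((List.finRange (2*j-2)).erase i).map
    (fun k => idx j k (c k))) (by
      have := i.isLt
      simp [List.length_erase_of_mem]; omega)
  simpa [mul_assoc, Function.comp_def, E] using this

lemma sig_eq (j : ℕ) (hj : 2 ≤ j) (h0 : 0 < 4*j-1) (h1 : 1 < 4*j-1)
    (h2 : 2 < 4*j-1) :
    sig j = E j ⟨0, h0⟩ + E j ⟨1, h1⟩ + E j ⟨2, h2⟩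
      + ∑ k, ι ℚ (loopv j k) := by
  let F : ℕ → ExteriorAlgebra ℚ (Fin (4*j-1) → ℚ) := fun m =>
    if h : m < 4*j-1 then E j ⟨m, h⟩ else 0
  have hσ : sig j = ∑ m ∈ Finset.range (4*j-1), F m := by
    rw [sig, ← Fin.sum_univ_eq_sum_range]
    refine Finset.sum_congr rfl fun m _ => ?_
    simp [F]
  have hpair : ∀ n, ∑ m ∈ Finset.range (3 + 2*n), F m
      = F 0 + F 1 + F 2 + ∑ k ∈ Finset.range n, (F (2*k+3) + F (2*k+4)) := by
    intro n
    induction n with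
    | zero => simp [Finset.sum_range_succ]
    | succ n ih =>
      rw [show 3 + 2*(n+1) = 3 + 2*n + 1 + 1 by ring, Finset.sum_range_succ,
        Finset.sum_range_succ, ih, Finset.sum_range_succ _ n,
        show 3 + 2*n = 2*n+3 by ring]
      abel
  have e : 4*j-1 = 3 + 2*(2*j-2) := by omega
  have hr : Finset.range (4*j-1) = Finset.range (3 + 2*(2*j-2)) := by rw [← e]
  rw [hσ, hr, hpair, ← Fin.sum_univ_eq_sum_range (fun k => F (2*k+3) + F (2*k+4))]
  congr 1
  · simp only [F, dif_pos h0, dif_pos h1, dif_pos h2]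
  · refine Finset.sum_congr rfl fun k _ => ?_
    have h3 : 2*(k:ℕ)+3 < 4*j-1 := by omega
    have h4 : 2*(k:ℕ)+4 < 4*j-1 := by omega
    simp only [F, dif_pos h3, dif_pos h4, loopv, map_add]
    rfl

lemma q_comm {V : Type*} [AddCommGroup V] [Module ℚ V] (x a b : V) :
    ι ℚ x * (ι ℚ a * ι ℚ b) = ι ℚ a * ι ℚ b * ι ℚ x := by
  rw [← mul_assoc, anti x a, neg_mul, mul_assoc, anti x b]
  simp [mul_assoc]

lemma q_three {V : Type*} [AddCommGroup V] [Module ℚ V] (a b c : V) :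
    (ι ℚ a + ι ℚ b + ι ℚ c) * (ι ℚ a * ι ℚ b - ι ℚ a * ι ℚ c + ι ℚ b * ι ℚ c)
      = (3 : ℚ) • (ι ℚ a * ι ℚ b * ι ℚ c) := by
  have sq : ∀ x y : V, ι ℚ x * (ι ℚ x * ι ℚ y) = 0 := fun x y => by
    rw [← mul_assoc, ExteriorAlgebra.ι_sq_zero, zero_mul]
  have sq' : ∀ x y : V, ι ℚ x * (ι ℚ y * ι ℚ x) = 0 := fun x y => by
    rw [anti y x, mul_neg, sq, neg_zero]
  have h1 : ι ℚ b * (ι ℚ a * ι ℚ c) = - (ι ℚ a * ι ℚ b * ι ℚ c) := by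
    rw [← mul_assoc, anti b a, neg_mul]
  simp only [add_mul, mul_add, mul_sub, sq, sq', h1, q_comm c a b]
  rw [mul_assoc (ι ℚ a)]
  module

lemma key (j : ℕ) (hj : 2 ≤ j) (h0 : 0 < 4*j-1) (h1 : 1 < 4*j-1)
    (h2 : 2 < 4*j-1) (i : Fin (2*j-2)) :
    sig j * ((E j ⟨0, h0⟩ * E j ⟨1, h1⟩ - E j ⟨0, h0⟩ * E j ⟨2, h2⟩
            + E j ⟨1, h1⟩ * E j ⟨2, h2⟩) * SI j {i})
      = (3 : ℚ) • (E j ⟨0, h0⟩ * E j ⟨1, h1⟩ * E j ⟨2, h2⟩ * SI j {i})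
        + (-1 : ℚ)^(i : ℕ) •
        ((E j ⟨0, h0⟩ * E j ⟨1, h1⟩ - E j ⟨0, h0⟩ * E j ⟨2, h2⟩
            + E j ⟨1, h1⟩ * E j ⟨2, h2⟩) * SI j ∅) := by
  rw [sig_eq j hj h0 h1 h2, add_mul, ← mul_assoc]
  congr 1
  · simp only [E]
    rw [q_three, smul_mul_assoc]
  · have hc : ∀ x : Fin (4*j-1) → ℚ, ι ℚ x * (E j ⟨0, h0⟩ * E j ⟨1, h1⟩
        - E j ⟨0, h0⟩ * E j ⟨2, h2⟩ + E j ⟨1, h1⟩ * E j ⟨2, h2⟩)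
        = (E j ⟨0, h0⟩ * E j ⟨1, h1⟩
        - E j ⟨0, h0⟩ * E j ⟨2, h2⟩ + E j ⟨1, h1⟩ * E j ⟨2, h2⟩)
          * ι ℚ x := by
      intro x
      simp only [E, mul_add, mul_sub, add_mul, sub_mul, q_comm]
    rw [Finset.sum_mul]
    simp only [← mul_assoc, hc]
    simp only [mul_assoc _ (ι ℚ _) (SI j {i})]
    rw [← Finset.mul_sum, Finset.sum_eq_single i]
    · rw [SI_eq, SI_eq]
      have := lemA (2*j-2) (loopv j) i
      simp only [Finset.mem_singleton, Finset.notMem_empty, if_false]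
      rw [this, mul_smul_comm]
    · intro k _ hk
      rw [SI_eq]
      simp only [Finset.mem_singleton]
      exact lemB _ _ i k hk
    · intro h; exact absurd (Finset.mem_univ i) h

end helpers

/-- For `j ≥ 2`, with `v = (e₁∧e₂ − e₁∧e₃ + e₂∧e₃) ∧ S` and
`w = ∑_{i=1}^{2j−2} (−1)^i e₁∧e₂∧e₃∧S_i`, the vector `(2j−2)·v − 3·w` lies in `K`. -/
theorem stmt10 (j : ℕ) (hj : 2 ≤ j) :
    ((2*j - 2 : ℕ) : ℚ) •
        ((E j ⟨0, by omega⟩ * E j ⟨1, by omega⟩ - E j ⟨0, by omega⟩ * E j ⟨2, by omega⟩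
            + E j ⟨1, by omega⟩ * E j ⟨2, by omega⟩) * SI j ∅)
      - (3 : ℚ) • (∑ i : Fin (2*j-2), ((-1 : ℚ)^((i : ℕ)+1)) •
          (E j ⟨0, by omega⟩ * E j ⟨1, by omega⟩ * E j ⟨2, by omega⟩ * SI j {i}))
      ∈ Ksub j := by
  have hmem : ∑ i : Fin (2*j-2), (-1 : ℚ)^(i : ℕ) • (sig j * ((E j ⟨0, by omega⟩ *
      E j ⟨1, by omega⟩ - E j ⟨0, by omega⟩ * E j ⟨2, by omega⟩
            + E j ⟨1, by omega⟩ * E j ⟨2, by omega⟩) * SI j {i})) ∈ Ksub j := by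
    refine Submodule.sum_mem _ fun i _ => Submodule.smul_mem _ _ ?_
    rw [add_mul, sub_mul, mul_add, mul_sub]
    exact add_mem (sub_mem (mem_pair j hj _ _ i) (mem_pair j hj _ _ i)) (mem_pair j hj _ _ i)
  convert hmem using 1
  simp only [key j hj (show 0 < 4*j-1 by omega) (show 1 < 4*j-1 by omega) (show 2 < 4*j-1 by omega), smul_add, smul_smul, Finset.sum_add_distrib]
  have h1 : ∀ i : ℕ, (-1 : ℚ)^i * (-1)^i = 1 := fun i => by
    rw [← mul_pow]; simp
  simp only [h1, one_smul, Finset.sum_const, Finset.card_univ, Fintype.card_fin,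
    ← Nat.cast_smul_eq_nsmul ℚ]
  rw [sub_eq_add_neg, add_comm]
  congr 1
  rw [Finset.smul_sum, ← Finset.sum_neg_distrib]
  refine Finset.sum_congr rfl fun i _ => ?_
  rw [smul_smul, ← neg_smul]
  congr 1
  ring
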